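/- Let R be a commutative ℚ-algebra, n ≥ 1, and A an n×n matrix over R. Define sequences recursively by d_n = 1, B'_0 = I, and for 1 ≤ k ≤ n: d_{n−k} = −(1/k)·Tr(A·B'_{k−1}) and B'_k = A·B'_{k−1} + d_{n−k}·I. Then for every i with 0 ≤ i ≤ n, d_i equals the coefficient of x^i in the characteristic polynomial of A. (Correctness of the characteristic-polynomial output of the Faddeev–Leverrier algorithm.) -/

import Mathlib

/-!
Let `χ` be the characteristic polynomial of `A` and write the adjugate of `X - A` as a polynomial
`∑ Qⱼ Xʲ` with matrix coefficients. Comparing coefficients in `(X - A) * adj (X - A) = χ` gives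
`Qⱼ = A * Qⱼ₊₁ + χⱼ₊₁`, which is the recursion for `B` read downwards from the degree. Jacobi's
formula gives `χ' = Tr (adj (X - A))`; together with the same product identity this yields
`Tr (A * Qⱼ) = (j - n) * χⱼ`, which for `j = n - k` is the recursion for `d` once `k` is cancelled.
Since `Qₙ₋₁ = 1`, it follows that `Bₖ = Qₙ₋₁₋ₖ` and `dⱼ = χⱼ`.
-/

open Matrix Polynomial

section Jacobi

variable {S R ι : Type*} [CommSemiring S] [CommRing R] [Algebra S R] [DecidableEq ι]

theorem derivation_prod (D : Derivation S R R) (s : Finset ι) (f : ι → R) :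
    D (∏ i ∈ s, f i) = ∑ i ∈ s, (∏ j ∈ s.erase i, f j) * D (f i) := by
  induction s using Finset.induction_on with
  | empty => simp
  | insert a s ha ih =>
    have erase_insert : ∀ i ∈ s, (insert a s).erase i = insert a (s.erase i) := fun i hi =>
      Finset.erase_insert_of_ne fun h => ha (h ▸ hi)
    rw [Finset.prod_insert ha, D.leibniz, ih, Finset.sum_insert ha, Finset.erase_insert ha,
      smul_eq_mul, smul_eq_mul, Finset.mul_sum, add_comm]
    congr 1
    refine Finset.sum_congr rfl fun i hi => ?_
    rw [erase_insert i hi, Finset.prod_insert fun h => ha (Finset.mem_of_mem_erase h), mul_assoc]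

variable [Fintype ι]

theorem derivation_det_eq_sum_det_updateCol (D : Derivation S R R) (M : Matrix ι ι R) :
    D M.det = ∑ i, (M.updateCol i ((M.map D).col i)).det := by
  have derivation_term (σ : Equiv.Perm ι) : D (∏ i, M (σ i) i) =
      ∑ i, ∏ j, M.updateCol i ((M.map D).col i) (σ j) j := by
    rw [derivation_prod]
    refine Finset.sum_congr rfl fun i hi => ?_
    rw [← Finset.prod_erase_mul _ _ hi, updateCol_self]
    congr 1
    refine Finset.prod_congr rfl fun j hj => ?_
    rw [updateCol_ne (Finset.ne_of_mem_erase hj)]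
  simp only [det_apply, map_sum, Units.smul_def, map_zsmul, derivation_term, Finset.smul_sum]
  exact Finset.sum_comm

theorem derivation_det (D : Derivation S R R) (M : Matrix ι ι R) :
    D M.det = (M.adjugate * M.map D).trace := by
  simp only [derivation_det_eq_sum_det_updateCol, ← cramer_apply, cramer_eq_adjugate_mulVec]
  rfl

end Jacobi

section CharAdjugate

variable {R ι : Type*} [CommRing R] [Fintype ι] [DecidableEq ι] (A : Matrix ι ι R)

theorem map_derivative_charmatrix : A.charmatrix.map derivative = 1 := by
  ext1 i j
  rcases eq_or_ne i j with rfl | h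
  · simp
  · simp [h]

theorem derivative_charpoly : derivative A.charpoly = A.charmatrix.adjugate.trace := by
  have jacobi := derivation_det derivative' A.charmatrix
  change derivative A.charpoly = (_ * A.charmatrix.map derivative).trace at jacobi
  rwa [map_derivative_charmatrix, mul_one] at jacobi

theorem trace_map_C_mul_adjugate_charmatrix :
    (A.map C * A.charmatrix.adjugate).trace =
      X * derivative A.charpoly - (Fintype.card ι : R[X]) * A.charpoly := by
  have map_C_eq : A.map C = scalar ι X - A.charmatrix := (sub_sub_cancel _ _).symm
  rw [map_C_eq, sub_mul, mul_adjugate, trace_sub, derivative_charpoly, ← charpoly]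
  simp [← smul_eq_diagonal_mul, mul_comm]

theorem trace_matPolyEquiv_coeff (M : Matrix ι ι R[X]) (j : ℕ) :
    ((matPolyEquiv M).coeff j).trace = M.trace.coeff j := by
  simp [trace]

theorem coeff_card_charpoly : A.charpoly.coeff (Fintype.card ι) = 1 := by
  nontriviality R
  simpa using A.charpoly_monic.coeff_natDegree

/-- The adjugate of `X - A` as a polynomial with matrix coefficients; its coefficients are the
matrices produced by the Faddeev–Leverrier recursion. Multiplication is that of `(Matrix ι ι R)[X]`,
so `X` commutes with matrices. -/
noncomputable def charAdjugate : (Matrix ι ι R)[X] := matPolyEquiv A.charmatrix.adjugate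

theorem X_sub_C_mul_charAdjugate :
    (X - C A) * charAdjugate A = A.charpoly.map (algebraMap R (Matrix ι ι R)) := by
  rw [charAdjugate, ← matPolyEquiv_charmatrix, ← map_mul, mul_adjugate, matPolyEquiv_smul_one,
    charpoly]

theorem coeff_charAdjugate (j : ℕ) :
    (charAdjugate A).coeff j =
      A * (charAdjugate A).coeff (j + 1) + A.charpoly.coeff (j + 1) • 1 := by
  have h := congrArg (coeff · (j + 1)) (X_sub_C_mul_charAdjugate A)
  simp only [sub_mul, coeff_sub, coeff_X_mul, coeff_C_mul, coeff_map,
    Algebra.algebraMap_eq_smul_one] at h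
  rw [← h, add_sub_cancel]

theorem coeff_charAdjugate_of_card_le {j : ℕ} (hj : Fintype.card ι ≤ j) :
    (charAdjugate A).coeff j = 0 := by
  nontriviality Matrix ι ι R
  have : Nontrivial R := (algebraMap R (Matrix ι ι R)).domain_nontrivial
  rcases eq_or_ne (charAdjugate A) 0 with h0 | h0
  · rw [h0, coeff_zero]
  have hdeg : 1 + (charAdjugate A).natDegree ≤ Fintype.card ι := by
    rw [← natDegree_X_sub_C A, ← (monic_X_sub_C A).natDegree_mul' h0, X_sub_C_mul_charAdjugate,
      ← A.charpoly_natDegree_eq_dim]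
    exact natDegree_map_le
  exact coeff_eq_zero_of_natDegree_lt (by lia)

theorem coeff_charAdjugate_of_add_one_eq_card {j : ℕ} (hj : j + 1 = Fintype.card ι) :
    (charAdjugate A).coeff j = 1 := by
  rw [coeff_charAdjugate, coeff_charAdjugate_of_card_le A hj.ge, hj, coeff_card_charpoly, mul_zero,
    zero_add, one_smul]

theorem trace_mul_coeff_charAdjugate (j : ℕ) :
    (A * (charAdjugate A).coeff j).trace = (j - Fintype.card ι) * A.charpoly.coeff j := by
  have h : A * (charAdjugate A).coeff j =
      (matPolyEquiv (A.map C * A.charmatrix.adjugate)).coeff j := by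
    rw [map_mul, matPolyEquiv_map_C, coeff_C_mul, charAdjugate]
  rw [h, trace_matPolyEquiv_coeff, trace_map_C_mul_adjugate_charmatrix, coeff_sub,
    coeff_natCast_mul, sub_mul]
  cases j with
  | zero => simp
  | succ j => rw [coeff_X_mul, coeff_derivative, Nat.cast_succ, mul_comm]

end CharAdjugate

section FaddeevLeverrier

variable {R ι : Type*} [CommRing R] [Fintype ι] [DecidableEq ι] {n : ℕ} {A : Matrix ι ι R}
  {d : ℕ → R} {B : ℕ → Matrix ι ι R}

theorem eq_coeff_charpoly_of_natCast_mul_eq_neg_trace {c : R} {j k : ℕ}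
    (hk : IsLeftRegular (k : R)) (hjk : j + k = Fintype.card ι)
    (hc : k * c = -(A * (charAdjugate A).coeff j).trace) : c = A.charpoly.coeff j := by
  apply hk
  change k * c = k * A.charpoly.coeff j
  rw [hc, trace_mul_coeff_charAdjugate, ← hjk, Nat.cast_add]
  ring

theorem eq_coeff_charAdjugate_of_recursion (hn : Fintype.card ι = n)
    (hreg : ∀ k, 1 ≤ k → k ≤ n → IsLeftRegular (k : R)) (hB0 : B 0 = 1)
    (hd : ∀ k, 1 ≤ k → k ≤ n → k * d (n - k) = -(A * B (k - 1)).trace)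
    (hB : ∀ k, 1 ≤ k → k ≤ n → B k = A * B (k - 1) + d (n - k) • 1)
    {j k : ℕ} (hjk : j + (k + 1) = n) : B k = (charAdjugate A).coeff j := by
  induction k generalizing j with
  | zero => rw [hB0, coeff_charAdjugate_of_add_one_eq_card A (hjk.trans hn.symm)]
  | succ k ih =>
    have hBk : B k = (charAdjugate A).coeff (j + 1) := ih (by lia)
    have hdk : d (j + 1) = A.charpoly.coeff (j + 1) := by
      refine eq_coeff_charpoly_of_natCast_mul_eq_neg_trace (hreg (k + 1) (by lia) (by lia))
        (by lia) ?_
      simpa [← hBk, show n - (k + 1) = j + 1 by lia] using hd (k + 1) (by lia) (by lia)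
    rw [hB (k + 1) (by lia) (by lia), Nat.add_sub_cancel, show n - (k + 1) = j + 1 by lia, hBk, hdk,
      ← coeff_charAdjugate]

end FaddeevLeverrier

section NatCast

variable {K R : Type*} [Semifield K] [Semiring R] [Algebra K R] {k : ℕ}

theorem natCast_mul_inv_smul (hk : (k : K) ≠ 0) (x : R) : (k : R) * ((k : K)⁻¹ • x) = x := by
  rw [← nsmul_eq_mul, ← Nat.cast_smul_eq_nsmul K, smul_inv_smul₀ hk]

theorem isLeftRegular_natCast (hk : (k : K) ≠ 0) : IsLeftRegular (k : R) := by
  simpa using (hk.isUnit.map (algebraMap K R)).isRegular.left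

end NatCast

theorem stmt9_general {R ι : Type*} [CommRing R] [Fintype ι] [DecidableEq ι] {n : ℕ}
    (hn : Fintype.card ι = n) (A : Matrix ι ι R) (d : ℕ → R) (B : ℕ → Matrix ι ι R)
    (hreg : ∀ k, 1 ≤ k → k ≤ n → IsLeftRegular (k : R)) (hdn : d n = 1) (hB0 : B 0 = 1)
    (hd : ∀ k, 1 ≤ k → k ≤ n → k * d (n - k) = -(A * B (k - 1)).trace)
    (hB : ∀ k, 1 ≤ k → k ≤ n → B k = A * B (k - 1) + d (n - k) • 1) :
    ∀ i ≤ n, d i = A.charpoly.coeff i := by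
  intro i hi
  obtain ⟨_ | k, rfl⟩ := Nat.exists_eq_add_of_le hi
  · rw [hdn, ← hn, coeff_card_charpoly]
  · refine eq_coeff_charpoly_of_natCast_mul_eq_neg_trace (hreg (k + 1) (by lia) (by lia)) hn.symm ?_
    rw [← eq_coeff_charAdjugate_of_recursion hn hreg hB0 hd hB rfl]
    simpa using hd (k + 1) (by lia) (by lia)

theorem stmt9 {R : Type*} [CommRing R] [Algebra ℚ R] {n : ℕ} (hn : 1 ≤ n)
    (A : Matrix (Fin n) (Fin n) R) (d : ℕ → R) (B : ℕ → Matrix (Fin n) (Fin n) R)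
    (hdn : d n = 1) (hB0 : B 0 = 1)
    (hd : ∀ k, 1 ≤ k → k ≤ n →
      d (n - k) = -((k : ℚ)⁻¹ • Matrix.trace (A * B (k - 1))))
    (hB : ∀ k, 1 ≤ k → k ≤ n → B k = A * B (k - 1) + d (n - k) • 1) :
    ∀ i ≤ n, d i = A.charpoly.coeff i :=
  have hne (k : ℕ) (hk : 1 ≤ k) : (k : ℚ) ≠ 0 := Nat.cast_ne_zero.mpr (by lia)
  stmt9_general (Fintype.card_fin n) A d B (fun k hk _ => isLeftRegular_natCast (hne k hk)) hdn hB0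
    (fun k hk hkn => by rw [hd k hk hkn, mul_neg, natCast_mul_inv_smul (hne k hk)]) hB
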